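/- Let n ≥ 2, let G be a connected simple graph on Fin n with Laplacian matrix L ∈ ℝ^{n×n}, and let J be the n×n matrix with all entries 1/n. Let S := { μ ∈ ℝ : there exists v ≠ 0 with Σᵢ vᵢ = 0 and L·v = μ·v } be the set of eigenvalues of L with eigenvector orthogonal to 𝟏, and set a := inf S, b := sup S, and q* := 2/(a + b). Then for every q ∈ ℝ, ‖I − q*·L − J‖₂ ≤ ‖I − q·L − J‖₂; moreover ‖I − q*·L − J‖₂ = (b − a)/(b + a) < 1. In other words, the uniform edge weight q* = 2/(λ₂(L) + λₙ(L)) minimizes the SLEM λ over all uniform-weight averaging matrices W_q = I − qL, and the resulting matrix guarantees convergence of the averaging consensus. -/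

import Mathlib

open Matrix

/-- The spectral norm (ℓ2 operator norm) of a real square matrix. -/
noncomputable def specNorm {n : ℕ} (M : Matrix (Fin n) (Fin n) ℝ) : ℝ :=
  ‖Matrix.toEuclideanCLM (𝕜 := ℝ) M‖

/-!
Subtracting `J` kills the direction `𝟏`, so the norm of `1 - q • L - J` is governed by the numbers
`|1 - q μ|`, for `μ` an eigenvalue of `L` on `𝟏ᗮ`. Eliminating `q` between the bounds at the extreme
eigenvalues `a` and `b` shows that the norm is at least `(b - a) / (b + a)`, and `q = 2 / (a + b)`
attains this value, since it makes `1 - q a` and `1 - q b` opposite. Connectedness of the graph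
makes `a` positive. The same argument works for a self-adjoint operator `T` and an orthogonal
projection `P` with `P T = 0` in place of `L` and `J`.
-/

section MinimaxStep

variable {a b : ℝ}

lemma sub_div_add_le_of_abs_one_sub_mul_le {q c : ℝ} (ha : 0 < a) (hb : 0 < b)
    (hac : |1 - q * a| ≤ c) (hbc : |1 - q * b| ≤ c) : (b - a) / (b + a) ≤ c := by
  rw [div_le_iff₀ (add_pos hb ha)]
  calc b - a = b * (1 - q * a) + a * -(1 - q * b) := by ring
    _ ≤ b * c + a * c := by
      gcongr
      · exact (le_abs_self _).trans hac
      · exact (neg_le_abs _).trans hbc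
    _ = c * (b + a) := by ring

lemma abs_one_sub_two_div_add_mul_le {μ : ℝ} (hab : 0 < a + b) (hμ : μ ∈ Set.Icc a b) :
    |1 - 2 / (a + b) * μ| ≤ (b - a) / (b + a) := by
  have hba : 0 < b + a := by linarith
  have h_eq : 1 - 2 / (a + b) * μ = (b + a - 2 * μ) / (b + a) := by
    rw [add_comm a b]
    field
  rw [h_eq, abs_div, abs_of_pos hba]
  gcongr
  rw [abs_le]
  constructor <;> linarith [hμ.1, hμ.2]

end MinimaxStep

section Operator

variable {𝕜 E : Type*} [RCLike 𝕜] [NormedAddCommGroup E]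

lemma norm_le_opNorm_of_apply_eq_smul [NormedSpace 𝕜 E] {T : E →L[𝕜] E} {c : 𝕜} {v : E}
    (hv : v ≠ 0) (hTv : T v = c • v) : ‖c‖ ≤ ‖T‖ := by
  refine le_of_mul_le_mul_right ?_ (norm_pos_iff.2 hv)
  simpa only [hTv, norm_smul] using T.le_opNorm v

/-- The real eigenvalues of `T` that have an eigenvector in the kernel of `P`. When `P` is the
orthogonal projection onto the span of `𝟏`, these are the eigenvalues of `T` on `𝟏ᗮ`. -/
def eigenvaluesOnKer [NormedSpace 𝕜 E] (T P : E →L[𝕜] E) : Set ℝ :=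
  {μ | ∃ v, v ≠ 0 ∧ P v = 0 ∧ T v = (μ : 𝕜) • v}

lemma abs_one_sub_mul_le_norm_of_mem_eigenvaluesOnKer [NormedSpace 𝕜 E] {T P : E →L[𝕜] E} {μ : ℝ}
    (hμ : μ ∈ eigenvaluesOnKer T P) (q : ℝ) : |1 - q * μ| ≤ ‖1 - (q : 𝕜) • T - P‖ := by
  obtain ⟨v, hv, hPv, hTv⟩ := hμ
  have h_eigen : (1 - (q : 𝕜) • T - P) v = ((1 - q * μ : ℝ) : 𝕜) • v := by
    simp [hPv, hTv, sub_smul, smul_smul]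
  simpa only [RCLike.norm_ofReal] using norm_le_opNorm_of_apply_eq_smul hv h_eigen

lemma apply_eq_zero_of_one_sub_smul_sub_apply_eq_smul [NormedSpace 𝕜 E] {T P : E →L[𝕜] E}
    {q c : 𝕜} {v : E} (hP : IsIdempotentElem P) (hPT : P * T = 0) (hc : c ≠ 0)
    (hv : (1 - q • T - P) v = c • v) : P v = 0 := by
  have h_zero : P * (1 - q • T - P) = 0 := by
    rw [mul_sub, mul_sub, mul_one, mul_smul_comm, hPT, hP.eq, smul_zero, sub_zero, sub_self]
  have h_smul : c • P v = 0 := by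
    rw [← map_smul, ← hv, ← mul_apply_eq_comp, h_zero, _root_.zero_apply]
  exact (smul_eq_zero.1 h_smul).resolve_left hc

lemma finite_eigenvaluesOnKer [NormedSpace 𝕜 E] [FiniteDimensional 𝕜 E] (T P : E →L[𝕜] E) :
    (eigenvaluesOnKer T P).Finite := by
  refine ((Module.End.finite_hasEigenvalue (T : E →ₗ[𝕜] E)).preimage
    (RCLike.ofReal_injective (K := 𝕜)).injOn).subset ?_
  rintro μ ⟨v, hv, -, hTv⟩
  exact Module.End.hasEigenvalue_of_hasEigenvector ⟨Module.End.mem_eigenspace_iff.2 hTv, hv⟩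

variable [InnerProductSpace 𝕜 E] [CompleteSpace E] {T P : E →L[𝕜] E}

lemma opNorm_le_of_forall_mem_spectrum {C : ℝ} (hT : IsSelfAdjoint T) (hC : 0 ≤ C)
    (h : ∀ c ∈ spectrum 𝕜 T, ‖c‖ ≤ C) : ‖T‖ ≤ C := by
  lift C to NNReal using hC
  rw [← coe_nnnorm, NNReal.coe_le_coe, ← ENNReal.coe_le_coe,
    ← ContinuousLinearMap.spectralRadius_eq_nnnorm T hT]
  exact iSup₂_le fun c hc ↦ ENNReal.coe_le_coe.2 (h c hc)

variable [FiniteDimensional 𝕜 E]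

lemma opNorm_le_of_forall_real_eigenvalue {C : ℝ} (hT : IsSelfAdjoint T) (hC : 0 ≤ C)
    (h : ∀ (μ : ℝ) (v : E), v ≠ 0 → T v = (μ : 𝕜) • v → |μ| ≤ C) : ‖T‖ ≤ C := by
  refine opNorm_le_of_forall_mem_spectrum hT hC fun c hc ↦ ?_
  rw [ContinuousLinearMap.spectrum_eq, ← Module.End.hasEigenvalue_iff_mem_spectrum] at hc
  obtain ⟨μ, rfl⟩ := RCLike.conj_eq_iff_real.1 (hT.isSymmetric.conj_eigenvalue_eq_self hc)
  obtain ⟨v, hv⟩ := hc.exists_hasEigenvector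
  simpa only [RCLike.norm_ofReal] using h μ v hv.2 hv.apply_eq_smul

lemma eigenvaluesOnKer_nonempty (hT : IsSelfAdjoint T) (hP : IsIdempotentElem P) (hP1 : P ≠ 1)
    (hPT : P * T = 0) : (eigenvaluesOnKer T P).Nonempty := by
  let K := LinearMap.ker (P : E →ₗ[𝕜] E)
  have h_maps : ∀ v ∈ K, (T : E →ₗ[𝕜] E) v ∈ K := fun v _ ↦ congr($hPT v)
  have : Nontrivial K := by
    rw [Submodule.nontrivial_iff_ne_bot, Submodule.ne_bot_iff]
    obtain ⟨x, hx⟩ := DFunLike.ne_iff.1 (sub_ne_zero.2 hP1.symm)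
    exact ⟨(1 - P) x, congr($hP.mul_one_sub_self x), hx⟩
  obtain ⟨v, hv⟩ := (hT.isSymmetric.restrict_invariant h_maps)
    |>.hasEigenvalue_iSup_of_finiteDimensional.exists_hasEigenvector
  exact ⟨_, v, Subtype.coe_ne_coe.2 hv.2, v.2, congr(($hv.apply_eq_smul : E))⟩

lemma norm_one_sub_smul_sub_le {q C : ℝ} (hT : IsSelfAdjoint T) (hP : IsStarProjection P)
    (hPT : P * T = 0) (hq : q ≠ 0) (hC : 0 ≤ C)
    (h : ∀ μ ∈ eigenvaluesOnKer T P, |1 - q * μ| ≤ C) : ‖1 - (q : 𝕜) • T - P‖ ≤ C := by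
  have h_self : IsSelfAdjoint (1 - (q : 𝕜) • T - P) :=
    ((IsSelfAdjoint.one _).sub (.smul (RCLike.conj_ofReal q) hT)).sub hP.isSelfAdjoint
  refine opNorm_le_of_forall_real_eigenvalue h_self hC fun l v hv hlv ↦ ?_
  obtain rfl | hl := eq_or_ne l 0
  · simpa only [abs_zero] using hC
  have hPv : P v = 0 := apply_eq_zero_of_one_sub_smul_sub_apply_eq_smul hP.isIdempotentElem hPT
    (RCLike.ofReal_ne_zero.2 hl) hlv
  have hqT : (q : 𝕜) • T v = ((1 - l : ℝ) : 𝕜) • v := by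
    rw [RCLike.ofReal_sub, RCLike.ofReal_one, sub_smul, one_smul, ← hlv]
    simp [hPv]
  have hμ : (1 - l) / q ∈ eigenvaluesOnKer T P := by
    refine ⟨v, hv, hPv, ?_⟩
    rw [RCLike.ofReal_div, div_eq_inv_mul, mul_smul, ← hqT,
      inv_smul_smul₀ (RCLike.ofReal_ne_zero.2 hq)]
  simpa only [mul_div_cancel₀ _ hq, sub_sub_cancel] using h _ hμ

theorem stmt8_general (hT : IsSelfAdjoint T) (hP : IsStarProjection P) (hP1 : P ≠ 1)
    (hPT : P * T = 0) (hpos : ∀ μ ∈ eigenvaluesOnKer T P, 0 < μ) {a b qstar : ℝ}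
    (ha : a = sInf (eigenvaluesOnKer T P)) (hb : b = sSup (eigenvaluesOnKer T P))
    (hq : qstar = 2 / (a + b)) :
    (∀ q : ℝ, ‖1 - (qstar : 𝕜) • T - P‖ ≤ ‖1 - (q : 𝕜) • T - P‖) ∧
    ‖1 - (qstar : 𝕜) • T - P‖ = (b - a) / (b + a) ∧ (b - a) / (b + a) < 1 := by
  have hfin := finite_eigenvaluesOnKer T P
  have hne := eigenvaluesOnKer_nonempty hT hP.isIdempotentElem hP1 hPT
  have haS : a ∈ eigenvaluesOnKer T P := ha ▸ hne.csInf_mem hfin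
  have hbS : b ∈ eigenvaluesOnKer T P := hb ▸ hne.csSup_mem hfin
  have hIcc : ∀ μ ∈ eigenvaluesOnKer T P, μ ∈ Set.Icc a b := fun μ hμ ↦
    ⟨ha ▸ csInf_le hfin.bddBelow hμ, hb ▸ le_csSup hfin.bddAbove hμ⟩
  have ha0 : 0 < a := hpos a haS
  have hb0 : 0 < b := hpos b hbS
  have hab : a ≤ b := (hIcc a haS).2
  have hlower (q : ℝ) : (b - a) / (b + a) ≤ ‖1 - (q : 𝕜) • T - P‖ :=
    sub_div_add_le_of_abs_one_sub_mul_le ha0 hb0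
      (abs_one_sub_mul_le_norm_of_mem_eigenvaluesOnKer haS q)
      (abs_one_sub_mul_le_norm_of_mem_eigenvaluesOnKer hbS q)
  have hupper : ‖1 - (qstar : 𝕜) • T - P‖ ≤ (b - a) / (b + a) := by
    subst hq
    exact norm_one_sub_smul_sub_le hT hP hPT (by positivity)
      (div_nonneg (sub_nonneg.2 hab) (by positivity))
      fun μ hμ ↦ abs_one_sub_two_div_add_mul_le (add_pos ha0 hb0) (hIcc μ hμ)
  refine ⟨fun q ↦ hupper.trans (hlower q), hupper.antisymm (hlower _), ?_⟩
  rw [div_lt_one (by positivity)]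
  linarith

end Operator

section AveragingMatrix

variable {ι : Type*} [Fintype ι]

/-- The matrix `J` with all entries `1 / |ι|`, which is the orthogonal projection onto the constant
vectors. -/
noncomputable def averagingMatrix (ι : Type*) [Fintype ι] : Matrix ι ι ℝ :=
  of fun _ _ ↦ 1 / Fintype.card ι

lemma averagingMatrix_mulVec (v : ι → ℝ) :
    averagingMatrix ι *ᵥ v = fun _ ↦ (∑ i, v i) / Fintype.card ι := by
  ext i
  simp only [averagingMatrix, mulVec, dotProduct, of_apply, ← Finset.mul_sum]
  ring

lemma averagingMatrix_mulVec_eq_zero_iff {v : ι → ℝ} :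
    averagingMatrix ι *ᵥ v = 0 ↔ ∑ i, v i = 0 := by
  rw [averagingMatrix_mulVec]
  obtain _ | _ := isEmpty_or_nonempty ι
  · simp [Subsingleton.elim _ (0 : ι → ℝ)]
  · simp [funext_iff]

lemma isStarProjection_averagingMatrix : IsStarProjection (averagingMatrix ι) where
  isIdempotentElem := by
    ext i j
    have : Nonempty ι := ⟨i⟩
    simp [averagingMatrix, mul_apply]
  isSelfAdjoint := by
    ext i j
    simp [averagingMatrix, star_apply]

lemma averagingMatrix_ne_one [DecidableEq ι] [Nontrivial ι] : averagingMatrix ι ≠ 1 := by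
  obtain ⟨i, j, hij⟩ := exists_pair_ne ι
  intro h
  simpa [averagingMatrix, hij] using congr($h i j)

lemma averagingMatrix_mul_lapMatrix [DecidableEq ι] (G : SimpleGraph ι) [DecidableRel G.Adj] :
    averagingMatrix ι * G.lapMatrix ℝ = 0 := by
  have h_col (j : ι) : ∑ i, G.lapMatrix ℝ i j = 0 := by
    have h_row := congrFun (G.lapMatrix_mulVec_const_eq_zero (R := ℝ)) j
    simpa [mulVec, dotProduct, (G.isSymm_lapMatrix (R := ℝ)).apply] using h_row
  ext i j
  simp [averagingMatrix, mul_apply, ← Finset.mul_sum, h_col]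

lemma eigenvaluesOnKer_toEuclideanCLM_averagingMatrix [DecidableEq ι] (L : Matrix ι ι ℝ) :
    eigenvaluesOnKer (toEuclideanCLM (𝕜 := ℝ) L) (toEuclideanCLM (𝕜 := ℝ) (averagingMatrix ι)) =
      {μ | ∃ v : ι → ℝ, v ≠ 0 ∧ ∑ i, v i = 0 ∧ L *ᵥ v = μ • v} := by
  ext μ
  refine (WithLp.equiv 2 (ι → ℝ)).exists_congr fun v ↦ ?_
  refine and_congr (WithLp.ofLp_eq_zero 2).not.symm
    (and_congr ?_ (WithLp.ofLp_injective 2).eq_iff.symm)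
  rw [← WithLp.ofLp_eq_zero 2, ofLp_toEuclideanCLM]
  exact averagingMatrix_mulVec_eq_zero_iff

end AveragingMatrix

section Laplacian

variable {V : Type*} [Fintype V] [DecidableEq V] {G : SimpleGraph V} [DecidableRel G.Adj]

lemma lapMatrix_mulVec_ne_zero_of_sum_eq_zero (hG : G.Preconnected) {v : V → ℝ} (hv : v ≠ 0)
    (hsum : ∑ i, v i = 0) : G.lapMatrix ℝ *ᵥ v ≠ 0 := by
  rw [Ne, G.lapMatrix_mulVec_eq_zero_iff_forall_reachable]
  intro hconst
  obtain ⟨i, hi⟩ := Function.ne_iff.1 hv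
  have : Nonempty V := ⟨i⟩
  have h_card : Fintype.card V * v i = 0 := by
    rw [← hsum, Fintype.sum_congr v (fun _ ↦ v i) fun j ↦ hconst j i (hG j i)]
    simp
  exact hi ((mul_eq_zero.1 h_card).resolve_left (by simp))

lemma pos_of_lapMatrix_mulVec_eq_smul (hG : G.Preconnected) {v : V → ℝ} {μ : ℝ} (hv : v ≠ 0)
    (hsum : ∑ i, v i = 0) (hμ : G.lapMatrix ℝ *ᵥ v = μ • v) : 0 < μ := by
  have h_nonneg : 0 ≤ μ * (v ⬝ᵥ v) := by
    simpa [hμ] using (G.posSemidef_lapMatrix ℝ).dotProduct_mulVec_nonneg v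
  have hvv : 0 < v ⬝ᵥ v := by simpa using dotProduct_star_self_pos_iff.2 hv
  refine (nonneg_of_mul_nonneg_left h_nonneg hvv).lt_of_ne' ?_
  rintro rfl
  exact lapMatrix_mulVec_ne_zero_of_sum_eq_zero hG hv hsum (by rw [hμ, zero_smul])

lemma pos_of_mem_eigenvaluesOnKer_lapMatrix (hG : G.Preconnected) {μ : ℝ}
    (hμ : μ ∈ eigenvaluesOnKer (toEuclideanCLM (𝕜 := ℝ) (G.lapMatrix ℝ))
      (toEuclideanCLM (𝕜 := ℝ) (averagingMatrix V))) : 0 < μ := by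
  rw [eigenvaluesOnKer_toEuclideanCLM_averagingMatrix] at hμ
  obtain ⟨v, hv, hsum, hLv⟩ := hμ
  exact pos_of_lapMatrix_mulVec_eq_smul hG hv hsum hLv

end Laplacian

/-- for a connected graph with Laplacian `L`, with `a` and `b` the
smallest and largest eigenvalues of `L` on the subspace orthogonal to `𝟏`, the uniform
edge weight `q* = 2/(a+b)` minimizes `‖I − q·L − J‖₂` over all `q`, and the optimal
value equals `(b−a)/(b+a) < 1`, so the resulting averaging matrix guarantees
convergence of the averaging consensus. -/
theorem stmt8 {n : ℕ} (hn : 2 ≤ n) (G : SimpleGraph (Fin n)) [DecidableRel G.Adj]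
    (hG : G.Connected)
    (L : Matrix (Fin n) (Fin n) ℝ) (hL : L = G.lapMatrix ℝ)
    (J : Matrix (Fin n) (Fin n) ℝ) (hJ : ∀ i j, J i j = 1 / n)
    (S : Set ℝ)
    (hS : S = { μ : ℝ | ∃ v : Fin n → ℝ, v ≠ 0 ∧ (∑ i, v i) = 0 ∧ L *ᵥ v = μ • v })
    (a b qstar : ℝ) (ha : a = sInf S) (hb : b = sSup S) (hq : qstar = 2 / (a + b)) :
    (∀ q : ℝ, specNorm (1 - qstar • L - J) ≤ specNorm (1 - q • L - J)) ∧
    specNorm (1 - qstar • L - J) = (b - a) / (b + a) ∧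
    (b - a) / (b + a) < 1 := by
  obtain rfl : J = averagingMatrix (Fin n) := by ext i j; simp [averagingMatrix, hJ]
  have : Nontrivial (Fin n) := Fin.nontrivial_iff_two_le.2 hn
  subst hL
  rw [← eigenvaluesOnKer_toEuclideanCLM_averagingMatrix] at hS
  subst hS
  have h_inj := (toEuclideanCLM (n := Fin n) (𝕜 := ℝ)).injective
  simpa [specNorm] using stmt8_general
    ((G.isHermitian_lapMatrix (R := ℝ)).isSelfAdjoint.map toEuclideanCLM)
    (isStarProjection_averagingMatrix.map toEuclideanCLM)
    ((map_ne_one_iff _ h_inj).2 averagingMatrix_ne_one)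
    (by rw [← map_mul, averagingMatrix_mul_lapMatrix, map_zero])
    (fun _ ↦ pos_of_mem_eigenvaluesOnKer_lapMatrix hG.preconnected)
    ha hb hq
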